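/- arXiv:1907.00632 — 2 statements merged into one kernel-verified Lean document; each statement's English description precedes it below -/
import Mathlib

section
/- Double-exponential law for the largest block: let L(π) denote the size of the largest block of a non-crossing partition π of [n], fix an integer x, and for n ≥ 2 set k(n) = ⌊log₂ n⌋ + x and α(n) = 2^{log₂ n − ⌊log₂ n⌋} = n/2^{⌊log₂ n⌋} ∈ [1, 2). Then the probability P[L_n ≤ k(n)] = (1/C_n)·#{π ∈ NC(n) : L(π) ≤ k(n)} satisfies P[L_n ≤ k(n)] = exp(−α(n)·2^{−(x+1)})·(1 + o(1)) as n → ∞; in particular, exp(α(n)·2^{−(x+1)})·P[L_n ≤ k(n)] → 1. -/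
/-!
Read a non-crossing partition of `[n]` from left to right, keeping track of the points whose block
is not yet complete. A block is completed at its maximum, and non-crossing means that its other
points are exactly the rightmost waiting points, so a completion is determined by the block
size alone. Non-crossing partitions with block sizes in `S` thus become positive walks with
steps `1 - c`, `c ∈ S ∪ {0}`, and their number is
`[Xⁿ] (∑ c ∈ S ∪ {0}, X ^ c) ^ (n + 1) / (n + 1)`.

For `S = {0, …, k}` the polynomial is `(1 - X ^ m) / (1 - X)` with `m = k + 1`, and expanding the
power gives
`P[L_n ≤ k] = ∑ j, (-1) ^ j * (n + 1).choose j * (n)_{jm} / (2n)_{jm}`,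
where `(n)_i` is the falling factorial. Since `(n)_i / (2n)_i ≈ 2⁻ⁱ` with relative error at most
`i² / (n + 1)`, the `j`-th term is asymptotic to `(-μ) ^ j / j!` for `μ = (n + 1) / 2 ^ m`, and as
long as `μ` stays bounded, dominated convergence compares the sum with `exp (-μ)`.
-/

/-- A finite partition of `Fin n` (representing `[n] = {1, …, n}`) is *non-crossing* if
there are no indices `a < b < c < d` with `a, c` in one block and `b, d` in a
different block. -/
def IsNonCrossing {n : ℕ} (P : Finpartition (Finset.univ : Finset (Fin n))) : Prop :=
  ∀ a b c d : Fin n, a < b → b < c → c < d →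
    ∀ B ∈ P.parts, ∀ B' ∈ P.parts,
      a ∈ B → c ∈ B → b ∈ B' → d ∈ B' → B = B'

/-- The type of non-crossing partitions of `[n]`. -/
def NCPart (n : ℕ) : Type :=
  {P : Finpartition (Finset.univ : Finset (Fin n)) // IsNonCrossing P}

noncomputable instance (n : ℕ) : Fintype (NCPart n) :=
  Fintype.ofInjective (fun P => P.1.parts)
    (fun _ _ h => Subtype.ext (Finpartition.ext h))

/-- The number of blocks of a non-crossing partition. -/
def numBlocks {n : ℕ} (P : NCPart n) : ℕ := P.1.parts.card

/-- The number of blocks of size `l` of a non-crossing partition. -/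
def numBlocksOfSize {n : ℕ} (l : ℕ) (P : NCPart n) : ℕ :=
  (P.1.parts.filter fun B => B.card = l).card

open Filter

/-- The size of the largest block of a non-crossing partition. -/
def maxBlockSize {n : ℕ} (P : NCPart n) : ℕ := P.1.parts.sup Finset.card

section

open Finset

section TopSubset

variable {α : Type*} [LinearOrder α]

/-- `U` is an upper set of the finite chain `s`: it consists of the `#U` largest elements of `s`. -/
def IsTopSubset (U s : Finset α) : Prop :=
  U ⊆ s ∧ ∀ u ∈ U, ∀ v ∈ s, u < v → v ∈ U

lemma exists_isTopSubset_card_eq (s : Finset α) {c : ℕ} (hc : c ≤ #s) :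
    ∃ U, IsTopSubset U s ∧ #U = c := by
  induction c with
  | zero => exact ⟨∅, by simp [IsTopSubset], rfl⟩
  | succ c ih =>
    obtain ⟨U, ⟨hUs, hU⟩, hcard⟩ := ih (by lia)
    have hne : (s \ U).Nonempty := by
      rw [← card_pos, card_sdiff_of_subset hUs]
      lia
    obtain ⟨m, hm, hmax⟩ := exists_max_image (s \ U) id hne
    have hmU : m ∉ U := (mem_sdiff.1 hm).2
    refine ⟨insert m U, ⟨by grind, fun u hu v hv huv => ?_⟩, by simp [hmU, hcard]⟩
    by_cases hvU : v ∈ U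
    · exact mem_insert_of_mem hvU
    · have hvm : v ≤ m := hmax v (mem_sdiff.2 ⟨hv, hvU⟩)
      grind

lemma IsTopSubset.eq_of_card_eq {s U V : Finset α} (hU : IsTopSubset U s)
    (hV : IsTopSubset V s) (hUV : #U = #V) : U = V := by
  by_cases h : U ⊆ V
  · exact eq_of_subset_of_card_le h hUV.ge
  · obtain ⟨a, haU, haV⟩ := not_subset.1 h
    refine (eq_of_subset_of_card_le (fun v hv => ?_) hUV.le).symm
    rcases lt_trichotomy a v with hav | rfl | hva
    · exact hU.2 a haU v (hV.1 hv) hav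
    · exact haU
    · exact absurd (hV.2 v hv a (hU.1 haU) hva) haV

end TopSubset

section PartialNC

variable {S : Finset ℕ} {n d : ℕ} {P : Finset (Finset ℕ)}

/-- `P` is the set of blocks with maximum `< n` of some non-crossing partition of a longer initial
segment of `ℕ`, and these blocks have cardinality in `S`. The field `exists_mem_of_lt_of_lt` is what
makes an extension to the right possible: a point strictly inside the span of a block could
not be joined to a later point without a crossing, so it has to be covered already. -/
structure IsPartialNC (S : Finset ℕ) (n : ℕ) (P : Finset (Finset ℕ)) : Prop where
  nonempty : ∀ B ∈ P, B.Nonempty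
  card_mem : ∀ B ∈ P, #B ∈ S
  lt : ∀ B ∈ P, ∀ x ∈ B, x < n
  eq_of_mem : ∀ B ∈ P, ∀ B' ∈ P, ∀ x ∈ B, x ∈ B' → B = B'
  eq_of_crossing : ∀ B ∈ P, ∀ B' ∈ P, ∀ a ∈ B, ∀ b ∈ B', ∀ c ∈ B, ∀ d ∈ B',
    a < b → b < c → c < d → B = B'
  exists_mem_of_lt_of_lt : ∀ B ∈ P, ∀ a ∈ B, ∀ c ∈ B, ∀ s, a < s → s < c → ∃ B' ∈ P, s ∈ B'

/-- The points of `{0, …, n - 1}` that lie in no block of `P`. -/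
def freePoints (n : ℕ) (P : Finset (Finset ℕ)) : Finset ℕ :=
  {x ∈ range n | ∀ B ∈ P, x ∉ B}

lemma mem_freePoints {x : ℕ} : x ∈ freePoints n P ↔ x < n ∧ ∀ B ∈ P, x ∉ B := by
  simp [freePoints]

/-- The block of `P` that contains `n`, or `∅` if there is none. -/
def blockAt (n : ℕ) (P : Finset (Finset ℕ)) : Finset ℕ :=
  {B ∈ P | n ∈ B}.sup id

/-- The family `P` without the block that contains `n`. -/
def removeBlockAt (n : ℕ) (P : Finset (Finset ℕ)) : Finset (Finset ℕ) :=
  {B ∈ P | n ∉ B}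

lemma blockAt_eq_empty_iff : blockAt n P = ∅ ↔ ∀ B ∈ P, n ∉ B := by
  simp only [blockAt, ← bot_eq_empty, Finset.sup_eq_bot_iff, mem_filter, id]
  grind

lemma removeBlockAt_eq_self (h : ∀ B ∈ P, n ∉ B) : removeBlockAt n P = P :=
  filter_true_of_mem h

namespace IsPartialNC

lemma notMem_self (hP : IsPartialNC S n P) : ∀ B ∈ P, n ∉ B :=
  fun B hB hn => (hP.lt B hB n hn).false

lemma blockAt_eq (hP : IsPartialNC S (n + 1) P) {B : Finset ℕ} (hB : B ∈ P) (hn : n ∈ B) :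
    blockAt n P = B := by
  have : {C ∈ P | n ∈ C} = {B} := by
    ext C
    simp only [mem_filter, mem_singleton]
    exact ⟨fun hC => hP.eq_of_mem C hC.1 B hB n hC.2 hn, fun hC => hC ▸ ⟨hB, hn⟩⟩
  rw [blockAt, this, sup_singleton, id]

lemma removeBlockAt_eq (hP : IsPartialNC S (n + 1) P) {B : Finset ℕ} (hB : B ∈ P) (hn : n ∈ B) :
    removeBlockAt n P = P.erase B := by
  ext C
  simp only [removeBlockAt, mem_filter, mem_erase]
  have := hP.eq_of_mem
  grind

lemma card_blockAt_mem (hP : IsPartialNC S (n + 1) P) : #(blockAt n P) ∈ insert 0 S := by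
  by_cases h : ∃ B ∈ P, n ∈ B
  · obtain ⟨B, hB, hn⟩ := h
    exact mem_insert_of_mem (hP.blockAt_eq hB hn ▸ hP.card_mem B hB)
  · push Not at h
    simp [blockAt_eq_empty_iff.2 h]

lemma isPartialNC_removeBlockAt (hP : IsPartialNC S (n + 1) P) :
    IsPartialNC S n (removeBlockAt n P) where
  nonempty B hB := hP.nonempty B (mem_filter.1 hB).1
  card_mem B hB := hP.card_mem B (mem_filter.1 hB).1
  lt B hB x hx := by
    obtain ⟨hB, hn⟩ := mem_filter.1 hB
    have := hP.lt B hB x hx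
    grind
  eq_of_mem B hB B' hB' := hP.eq_of_mem B (mem_filter.1 hB).1 B' (mem_filter.1 hB').1
  eq_of_crossing B hB B' hB' := hP.eq_of_crossing B (mem_filter.1 hB).1 B' (mem_filter.1 hB').1
  exists_mem_of_lt_of_lt B hB a ha c hc s has hsc := by
    obtain ⟨hB, hn⟩ := mem_filter.1 hB
    obtain ⟨B', hB', hs⟩ := hP.exists_mem_of_lt_of_lt B hB a ha c hc s has hsc
    refine ⟨B', mem_filter.2 ⟨hB', fun hn' => hn ?_⟩, hs⟩
    have hcn : c < n := by
      have := hP.lt B hB c hc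
      grind
    exact hP.eq_of_crossing B hB B' hB' a ha s hs c hc n hn' has hsc hcn ▸ hn'

lemma insert_freePoints_removeBlockAt (hP : IsPartialNC S (n + 1) P) :
    insert n (freePoints n (removeBlockAt n P)) = freePoints (n + 1) P ∪ blockAt n P := by
  by_cases h : ∃ B ∈ P, n ∈ B
  · obtain ⟨B, hB, hn⟩ := h
    have hlt := hP.lt B hB
    have heq := hP.eq_of_mem B hB
    ext x
    simp only [hP.blockAt_eq hB hn, hP.removeBlockAt_eq hB hn, mem_insert, mem_union,
      mem_freePoints, mem_erase]
    grind
  · push Not at h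
    ext x
    simp only [blockAt_eq_empty_iff.2 h, removeBlockAt_eq_self h, mem_insert, mem_union,
      mem_freePoints]
    grind

lemma card_freePoints_removeBlockAt (hP : IsPartialNC S (n + 1) P) :
    #(freePoints n (removeBlockAt n P)) + 1 = #(freePoints (n + 1) P) + #(blockAt n P) := by
  rw [← card_insert_of_notMem (a := n) (by simp [mem_freePoints]),
    hP.insert_freePoints_removeBlockAt, card_union_of_disjoint]
  rw [disjoint_left]
  intro x hx hxB
  obtain ⟨B, hB, hxB⟩ := mem_sup.1 hxB
  exact (mem_freePoints.1 hx).2 B (mem_filter.1 hB).1 hxB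

lemma isTopSubset_erase (hP : IsPartialNC S (n + 1) P) {B : Finset ℕ} (hB : B ∈ P) (hn : n ∈ B) :
    IsTopSubset (B.erase n) (freePoints n (removeBlockAt n P)) := by
  have hfree := hP.insert_freePoints_removeBlockAt
  rw [hP.blockAt_eq hB hn] at hfree
  refine ⟨fun x hx => ?_, fun u hu v hv huv => ?_⟩
  · have : x ∈ insert n (freePoints n (removeBlockAt n P)) :=
      hfree ▸ mem_union_right _ (mem_of_mem_erase hx)
    grind
  · have hvn : v < n := (mem_freePoints.1 hv).1
    have hvB : v ∈ freePoints (n + 1) P ∪ B := hfree ▸ mem_insert_of_mem hv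
    refine mem_erase.2 ⟨hvn.ne, (mem_union.1 hvB).resolve_left fun hv => ?_⟩
    obtain ⟨C, hC, hvC⟩ := hP.exists_mem_of_lt_of_lt B hB u (mem_of_mem_erase hu) n hn v huv hvn
    exact (mem_freePoints.1 hv).2 C hC hvC

lemma ext_removeBlockAt {Q : Finset (Finset ℕ)} (hP : IsPartialNC S (n + 1) P)
    (hQ : IsPartialNC S (n + 1) Q) (hcard : #(blockAt n P) = #(blockAt n Q))
    (hrem : removeBlockAt n P = removeBlockAt n Q) : P = Q := by
  by_cases hPn : ∀ B ∈ P, n ∉ B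
  · have hQn : ∀ C ∈ Q, n ∉ C := by
      rwa [← blockAt_eq_empty_iff, ← card_eq_zero, ← hcard, card_eq_zero, blockAt_eq_empty_iff]
    rwa [removeBlockAt_eq_self hPn, removeBlockAt_eq_self hQn] at hrem
  · have hQn : ¬ ∀ C ∈ Q, n ∉ C := by
      rwa [← blockAt_eq_empty_iff, ← card_eq_zero, ← hcard, card_eq_zero, blockAt_eq_empty_iff]
    push Not at hPn hQn
    obtain ⟨B, hB, hnB⟩ := hPn
    obtain ⟨C, hC, hnC⟩ := hQn
    rw [hP.blockAt_eq hB hnB, hQ.blockAt_eq hC hnC] at hcard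
    have hBC : B.erase n = C.erase n :=
      (hP.isTopSubset_erase hB hnB).eq_of_card_eq (hrem ▸ hQ.isTopSubset_erase hC hnC) (by
        rw [card_erase_of_mem hnB, card_erase_of_mem hnC, hcard])
    obtain rfl : B = C := by rw [← insert_erase hnB, hBC, insert_erase hnC]
    rw [hP.removeBlockAt_eq hB hnB, hQ.removeBlockAt_eq hC hnC] at hrem
    rw [← insert_erase hB, hrem, insert_erase hC]

lemma succ (hP : IsPartialNC S n P) : IsPartialNC S (n + 1) P where
  __ := hP
  lt B hB x hx := (hP.lt B hB x hx).trans n.lt_succ_self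

lemma insert_insert (hP : IsPartialNC S n P) {U : Finset ℕ} (hU : IsTopSubset U (freePoints n P))
    (hcard : #U + 1 ∈ S) : IsPartialNC S (n + 1) (insert (insert n U) P) := by
  have hfree : ∀ u ∈ insert n U, ∀ B ∈ P, u ∉ B := by
    have hUfree : ∀ u ∈ U, ∀ B ∈ P, u ∉ B := fun u hu => (mem_freePoints.1 (hU.1 hu)).2
    exact forall_mem_insert _ _ _ |>.2 ⟨hP.notMem_self, hUfree⟩
  have hUn : ∀ u ∈ U, u < n := fun u hu => (mem_freePoints.1 (hU.1 hu)).1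
  have hcov := hP.exists_mem_of_lt_of_lt
  refine ⟨?_, ?_, ?_, ?_, ?_, ?_⟩
  · have := hP.nonempty
    grind
  · have := hP.card_mem
    have := card_insert_of_notMem fun h => (hUn n h).false
    grind
  · have := hP.lt
    grind
  · have := hP.eq_of_mem
    grind
  · intro B hB B' hB' a ha b hb c hc d hd hab hbc hcd
    rcases mem_insert.1 hB with rfl | hBP <;> rcases mem_insert.1 hB' with rfl | hBP'
    · rfl
    · obtain ⟨C, hC, hcC⟩ := hcov B' hBP' b hb d hd c hbc hcd
      exact absurd hcC (hfree c hc C hC)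
    · obtain ⟨C, hC, hbC⟩ := hcov B hBP a ha c hc b hab hbc
      exact absurd hbC (hfree b hb C hC)
    · exact hP.eq_of_crossing B hBP B' hBP' a ha b hb c hc d hd hab hbc hcd
  · rw [forall_mem_insert]
    refine ⟨fun a ha c hc s has hsc => ?_, fun B hB a ha c hc s has hsc => ?_⟩
    · have han : a ≠ n := by grind
      have := hU.2 a (by grind) s
      simp only [mem_freePoints] at this
      grind
    · grind

end IsPartialNC

lemma blockAt_insert_insert (hP : IsPartialNC S n P) (U : Finset ℕ) :
    blockAt n (insert (insert n U) P) = insert n U := by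
  rw [blockAt, filter_insert, if_pos (mem_insert_self n U), sup_insert,
    filter_false_of_mem hP.notMem_self, sup_empty, sup_bot_eq, id]

lemma removeBlockAt_insert_insert (hP : IsPartialNC S n P) (U : Finset ℕ) :
    removeBlockAt n (insert (insert n U) P) = P := by
  rw [removeBlockAt, filter_insert, if_neg (not_not_intro (mem_insert_self n U)),
    filter_true_of_mem hP.notMem_self]

open Classical in
/-- The partial non-crossing partitions of `{0, …, n - 1}` with `d - 1` free points. Shifting
the number of free points by one puts the empty family at height `1` and makes `0` an absorbing
height, so that the recurrence `card_partialNCs_succ` needs no truncated subtraction. -/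
noncomputable def partialNCs (S : Finset ℕ) (n d : ℕ) : Finset (Finset (Finset ℕ)) :=
  {P ∈ (range n).powerset.powerset | IsPartialNC S n P ∧ #(freePoints n P) + 1 = d}

lemma mem_partialNCs : P ∈ partialNCs S n d ↔ IsPartialNC S n P ∧ #(freePoints n P) + 1 = d := by
  simp only [partialNCs, mem_filter, mem_powerset, and_iff_right_iff_imp]
  exact fun hP B hB => mem_powerset.2 fun x hx => mem_range.2 (hP.1.lt B hB x hx)

lemma partialNCs_zero_right : partialNCs S n 0 = ∅ := by
  ext P
  simp [mem_partialNCs]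

lemma card_partialNCs_zero_left : #(partialNCs S 0 d) = if d = 1 then 1 else 0 := by
  have hmem (P) : P ∈ partialNCs S 0 d ↔ P = ∅ ∧ d = 1 := by
    rw [mem_partialNCs]
    refine ⟨fun ⟨hP, hd⟩ => ⟨?_, by simpa [freePoints, eq_comm] using hd⟩, ?_⟩
    · refine eq_empty_of_forall_notMem fun B hB => ?_
      obtain ⟨x, hx⟩ := hP.nonempty B hB
      exact absurd (hP.lt B hB x hx) x.not_lt_zero
    · rintro ⟨rfl, rfl⟩
      exact ⟨by constructor <;> simp, by simp [freePoints]⟩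
  split_ifs with hd
  · exact card_eq_one.2 ⟨∅, by
      ext P
      rw [hmem, mem_singleton, and_iff_left hd]⟩
  · exact card_eq_zero.2 (eq_empty_of_forall_notMem fun P hP => hd ((hmem P).1 hP).2)

lemma IsPartialNC.exists_removeBlockAt_eq (hP : IsPartialNC S n P) {c : ℕ} (hc : c ∈ insert 0 S)
    (hcard : c ≤ #(freePoints n P) + 1) :
    ∃ Q, IsPartialNC S (n + 1) Q ∧ #(blockAt n Q) = c ∧ removeBlockAt n Q = P := by
  rcases c with _ | c
  · exact ⟨P, hP.succ, card_eq_zero.2 (blockAt_eq_empty_iff.2 hP.notMem_self),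
      removeBlockAt_eq_self hP.notMem_self⟩
  · obtain ⟨U, hU, hUc⟩ := exists_isTopSubset_card_eq (freePoints n P) (c := c) (by lia)
    have hnU : n ∉ U := fun h => (mem_freePoints.1 (hU.1 h)).1.false
    refine ⟨_, hP.insert_insert hU (by simpa [hUc] using hc), ?_,
      removeBlockAt_insert_insert hP U⟩
    rw [blockAt_insert_insert hP, card_insert_of_notMem hnU, hUc]

lemma card_filter_card_blockAt_eq {c : ℕ} (hc : c ∈ insert 0 S) :
    #{P ∈ partialNCs S (n + 1) (d + 1) | #(blockAt n P) = c} = #(partialNCs S n (d + c)) := by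
  refine card_nbij (removeBlockAt n) (fun P hP => ?_) (fun P hP Q hQ hPQ => ?_) (fun P hP => ?_)
  · simp only [coe_filter, Set.mem_ofPred_eq, mem_coe, mem_partialNCs] at hP ⊢
    obtain ⟨⟨hP, hd⟩, hc⟩ := hP
    have := hP.card_freePoints_removeBlockAt
    exact ⟨hP.isPartialNC_removeBlockAt, by lia⟩
  · simp only [coe_filter, Set.mem_ofPred_eq, mem_partialNCs] at hP hQ
    exact hP.1.1.ext_removeBlockAt hQ.1.1 (hP.2.trans hQ.2.symm) hPQ
  · simp only [mem_coe, mem_partialNCs] at hP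
    obtain ⟨hP, hd⟩ := hP
    obtain ⟨Q, hQ, hQc, rfl⟩ := hP.exists_removeBlockAt_eq hc (by lia)
    have := hQ.card_freePoints_removeBlockAt
    refine ⟨Q, ?_, rfl⟩
    simp only [coe_filter, Set.mem_ofPred_eq, mem_partialNCs]
    exact ⟨⟨hQ, by lia⟩, hQc⟩

lemma card_partialNCs_succ :
    #(partialNCs S (n + 1) (d + 1)) = ∑ c ∈ insert 0 S, #(partialNCs S n (d + c)) := by
  rw [card_eq_sum_card_fiberwise fun P hP => (mem_partialNCs.1 hP).1.card_blockAt_mem]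
  exact sum_congr rfl fun c hc => card_filter_card_blockAt_eq hc

end PartialNC

section NCPart

variable {S : Finset ℕ} {n : ℕ} {P : Finset (Finset ℕ)}

/-- The blocks of `π`, as sets of natural numbers. -/
def valBlocks (π : NCPart n) : Finset (Finset ℕ) :=
  π.1.parts.map (mapEmbedding Fin.valEmbedding).toEmbedding

lemma valBlocks_injective : Function.Injective (valBlocks (n := n)) :=
  fun _ _ h => Subtype.ext (Finpartition.ext (map_injective _ h))

lemma forall_mem_valBlocks {π : NCPart n} {p : Finset ℕ → Prop} :
    (∀ C ∈ valBlocks π, p C) ↔ ∀ B ∈ π.1.parts, p (B.map Fin.valEmbedding) := by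
  simp [valBlocks]

lemma exists_mem_valBlocks (π : NCPart n) {s : ℕ} (hs : s < n) : ∃ C ∈ valBlocks π, s ∈ C := by
  obtain ⟨B, hB, hsB⟩ := π.1.exists_mem (mem_univ (⟨s, hs⟩ : Fin n))
  exact ⟨_, mem_map_of_mem _ hB, mem_map_of_mem Fin.valEmbedding hsB⟩

lemma freePoints_valBlocks (π : NCPart n) : freePoints n (valBlocks π) = ∅ := by
  refine eq_empty_of_forall_notMem fun s hs => ?_
  obtain ⟨hsn, hfree⟩ := mem_freePoints.1 hs
  obtain ⟨C, hC, hsC⟩ := exists_mem_valBlocks π hsn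
  exact hfree C hC hsC

lemma isPartialNC_valBlocks (π : NCPart n) (hS : ∀ B ∈ π.1.parts, #B ∈ S) :
    IsPartialNC S n (valBlocks π) where
  nonempty := forall_mem_valBlocks.2 fun _ hB => (π.1.nonempty_of_mem_parts hB).map
  card_mem := forall_mem_valBlocks.2 fun B hB => by simpa using hS B hB
  lt := forall_mem_valBlocks.2 fun B _ => forall_mem_map.2 fun x _ => x.isLt
  eq_of_mem := forall_mem_valBlocks.2 fun B hB => forall_mem_valBlocks.2 fun B' hB' =>
    forall_mem_map.2 fun x hx hx' =>
      congrArg _ (π.1.eq_of_mem_parts hB hB' hx ((mem_map' _).1 hx'))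
  eq_of_crossing := forall_mem_valBlocks.2 fun B hB => forall_mem_valBlocks.2 fun B' hB' => by
    simp only [forall_mem_map]
    exact fun a ha b hb c hc d hd hab hbc hcd =>
      congrArg _ (π.2 a b c d hab hbc hcd B hB B' hB' ha hc hb hd)
  exists_mem_of_lt_of_lt := forall_mem_valBlocks.2 fun B _ a _ => forall_mem_map.2
    fun c _ s _ hsc => exists_mem_valBlocks π (hsc.trans c.isLt)

lemma IsPartialNC.exists_valBlocks_eq (hP : IsPartialNC S n P) (hfree : freePoints n P = ∅) :
    ∃ π : NCPart n, valBlocks π = P := by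
  let parts : Finset (Finset (Fin n)) := {B | B.map Fin.valEmbedding ∈ P}
  have mem_parts {B} : B ∈ parts ↔ B.map Fin.valEmbedding ∈ P := by simp [parts]
  have eq_of_mem : ∀ B ∈ parts, ∀ B' ∈ parts, ∀ x ∈ B, x ∈ B' → B = B' :=
    fun B hB B' hB' x hx hx' => map_injective _ (hP.eq_of_mem _ (mem_parts.1 hB) _
      (mem_parts.1 hB') x (mem_map_of_mem _ hx) (mem_map_of_mem _ hx'))
  have map_attachFin {C} (hC : C ∈ P) :
      (C.attachFin (hP.lt C hC)).map Fin.valEmbedding = C := map_valEmbedding_attachFin _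
  have exists_mem (x : Fin n) : ∃ B ∈ parts, x ∈ B := by
    have : (x : ℕ) ∉ freePoints n P := hfree ▸ notMem_empty _
    simp only [mem_freePoints, x.isLt, true_and, not_forall, not_not] at this
    obtain ⟨C, hC, hxC⟩ := this
    exact ⟨_, mem_parts.2 ((map_attachFin hC).symm ▸ hC), (mem_attachFin _).2 hxC⟩
  let π : Finpartition (univ : Finset (Fin n)) := .ofExistsUnique parts (fun _ _ => subset_univ _)
    (fun x _ => by
      obtain ⟨B, hB, hx⟩ := exists_mem x
      exact ⟨B, ⟨hB, hx⟩, fun B' h => eq_of_mem B' h.1 B hB x h.2 hx⟩)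
    (fun h => by simpa using hP.nonempty _ (mem_parts.1 h))
  have isNonCrossing : IsNonCrossing π := fun a b c d hab hbc hcd B hB B' hB' ha hc hb hd =>
    map_injective _ (hP.eq_of_crossing _ (mem_parts.1 hB) _ (mem_parts.1 hB') a
      (mem_map_of_mem _ ha) b (mem_map_of_mem _ hb) c (mem_map_of_mem _ hc) d
      (mem_map_of_mem _ hd) hab hbc hcd)
  refine ⟨⟨π, isNonCrossing⟩, ext fun C => mem_map.trans ⟨?_, fun hC => ?_⟩⟩
  · rintro ⟨B, hB, rfl⟩
    exact mem_parts.1 hB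
  · exact ⟨_, mem_parts.2 ((map_attachFin hC).symm ▸ hC), map_attachFin hC⟩

lemma natCard_NCPart_forall_card_mem (S : Finset ℕ) (n : ℕ) :
    Nat.card {π : NCPart n // ∀ B ∈ π.1.parts, #B ∈ S} = #(partialNCs S n 1) := by
  classical
  rw [Nat.card_eq_fintype_card, Fintype.card_subtype]
  refine card_nbij valBlocks (fun π hπ => ?_) (valBlocks_injective.injOn) (fun P hP => ?_)
  · exact mem_partialNCs.2 ⟨isPartialNC_valBlocks π (mem_filter.1 hπ).2,
      by rw [freePoints_valBlocks, card_empty]⟩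
  · obtain ⟨hP, hfree⟩ := mem_partialNCs.1 hP
    obtain ⟨π, rfl⟩ := hP.exists_valBlocks_eq (card_eq_zero.1 (Nat.succ_injective hfree))
    refine ⟨π, mem_filter.2 ⟨mem_univ π, fun B hB => ?_⟩, rfl⟩
    simpa using forall_mem_valBlocks.1 hP.card_mem B hB

end NCPart

section Recurrence

open Polynomial

section Semiring

variable {R : Type*} [CommSemiring R]

lemma coeff_X_mul_derivative (p : R[X]) (n : ℕ) :
    (X * derivative p).coeff n = n * p.coeff n := by
  cases n with
  | zero => simp
  | succ n => rw [coeff_X_mul, coeff_derivative, mul_comm, Nat.cast_succ]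

lemma X_mul_derivative_X_pow (d : ℕ) :
    X * derivative (X ^ d : R[X]) = (d : R[X]) * X ^ d := by
  ext i
  rw [coeff_X_mul_derivative, coeff_natCast_mul, coeff_X_pow]
  split_ifs with h
  · rw [h]
  · simp

lemma sum_natCast_mul_coeff_X_pow_mul (A : Finset ℕ) (ψ : R[X]) (d n : ℕ) :
    ∑ c ∈ A, ((d + c : ℕ) : R) * (X ^ (d + c) * ψ).coeff n =
      (X * derivative (X ^ d * ∑ c ∈ A, X ^ c) * ψ).coeff n := by
  simp only [mul_sum, derivative_sum, ← pow_add, X_mul_derivative_X_pow, sum_mul, finsetSum_coeff,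
    mul_assoc, coeff_natCast_mul]

end Semiring

lemma succ_mul_X_mul_derivative_mul_pow {R : Type*} [CommRing R] (φ : R[X]) (d n : ℕ) :
    ((n + 1 : ℕ) : R[X]) * (X * derivative (X ^ d * φ) * φ ^ n) =
      X * derivative (X ^ d * φ ^ (n + 1)) + ((n * d : ℕ) : R[X]) * (X ^ d * φ ^ (n + 1)) := by
  rw [derivative_mul, derivative_mul, derivative_pow_succ]
  simp only [map_add, map_natCast, map_one]
  push_cast
  linear_combination (n * φ ^ (n + 1)) * X_mul_derivative_X_pow (R := R) d

/-- Kemperman's formula: by the recurrence, `t n d` counts the walks of length `n` from height `1`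
to height `d` that stay positive and have steps `1 - c` with `c ∈ A`. -/
lemma succ_mul_eq_coeff_of_recurrence {A : Finset ℕ} (hA : 0 ∈ A) {t : ℕ → ℕ → ℕ}
    (hzero : ∀ d, t 0 d = if d = 1 then 1 else 0) (hsucc_zero : ∀ n, t (n + 1) 0 = 0)
    (hsucc : ∀ n d, t (n + 1) (d + 1) = ∑ c ∈ A, t n (d + c)) (n d : ℕ) :
    ((n + 1) * t n d : ℤ) = d * (X ^ d * (∑ c ∈ A, X ^ c) ^ (n + 1) : ℤ[X]).coeff (n + 1) := by
  set φ : ℤ[X] := ∑ c ∈ A, X ^ c with hφ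
  induction n generalizing d with
  | zero =>
    have : φ.coeff 0 = 1 := by simp [hφ, coeff_X_pow, hA]
    rcases d with _ | _ | d
    · simp [hzero]
    · simp [hzero, this]
    · simp [hzero, coeff_X_pow_mul']
  | succ n ih =>
    rcases d with _ | d
    · simp [hsucc_zero]
    have hsum : ((n + 1) * t (n + 1) (d + 1) : ℤ) =
        (X * derivative (X ^ d * φ) * φ ^ (n + 1)).coeff (n + 1) := by
      rw [hsucc, Nat.cast_sum, mul_sum, ← sum_natCast_mul_coeff_X_pow_mul]
      exact sum_congr rfl fun c _ => ih (d + c)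
    have hcoeff := congrArg (coeff · (n + 1)) (succ_mul_X_mul_derivative_mul_pow φ d (n + 1))
    simp only [coeff_add, coeff_natCast_mul, coeff_X_mul_derivative, ← hsum] at hcoeff
    have hshift : (X ^ (d + 1) * φ ^ (n + 1 + 1)).coeff (n + 1 + 1) =
        (X ^ d * φ ^ (n + 1 + 1)).coeff (n + 1) := by
      rw [pow_succ', mul_assoc, coeff_X_mul]
    rw [hshift]
    push_cast at hcoeff ⊢
    refine mul_left_cancel₀ (by positivity : (n + 1 : ℤ) ≠ 0) ?_
    linear_combination hcoeff

end Recurrence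

section Counting

open Polynomial

lemma coeff_geomSum_pow {R : Type*} [CommRing R] (m r n : ℕ) :
    ((∑ c ∈ range m, X ^ c : R[X]) ^ (r + 1)).coeff n = ∑ j ∈ range (r + 2),
      (-1) ^ j * (r + 1).choose j * if j * m ≤ n then ((r + (n - j * m)).choose r : R) else 0 := by
  set φ : R[X] := ∑ c ∈ range m, X ^ c
  have hgeom : (φ : PowerSeries R) * (1 - PowerSeries.X) = 1 - PowerSeries.X ^ m := by
    have := congrArg (fun p : R[X] => (p : PowerSeries R)) (geom_sum_mul_neg (X : R[X]) m)
    simpa using this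
  have hφ : (φ : PowerSeries R) ^ (r + 1) =
      (1 - PowerSeries.X ^ m) ^ (r + 1) * (PowerSeries.invOneSubPow R (r + 1)).val := by
    have := (PowerSeries.invOneSubPow R (r + 1)).inv_val
    rw [PowerSeries.invOneSubPow_inv_eq_one_sub_pow] at this
    rw [← hgeom, mul_pow, mul_assoc, this, mul_one]
  have hbinom : (1 - PowerSeries.X ^ m : PowerSeries R) ^ (r + 1) = ∑ j ∈ range (r + 2),
      PowerSeries.C ((-1) ^ j * (r + 1).choose j : R) * PowerSeries.X ^ (j * m) := by
    rw [sub_eq_neg_add, add_pow]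
    refine sum_congr rfl fun j _ => ?_
    rw [neg_pow, ← pow_mul, mul_comm m]
    simp only [map_mul, map_pow, map_neg, map_one, map_natCast]
    ring
  rw [← coeff_coe, Polynomial.coe_pow, hφ, hbinom, sum_mul, map_sum]
  refine sum_congr rfl fun j _ => ?_
  rw [mul_assoc, PowerSeries.coeff_C_mul, PowerSeries.coeff_X_pow_mul',
    PowerSeries.invOneSubPow_val_succ_eq_mk_add_choose, PowerSeries.coeff_mk]

lemma choose_sub_mul_descFactorial (a b i : ℕ) :
    (a - i).choose b * a.descFactorial i = a.choose b * (a - b).descFactorial i := by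
  induction i with
  | zero => simp
  | succ i ih =>
    rw [Nat.descFactorial_succ, Nat.descFactorial_succ, mul_left_comm (a.choose b), ← ih]
    rcases Nat.lt_or_ge i a with hi | hi
    · have hchoose := Nat.choose_mul_succ_eq (a - (i + 1)) b
      rw [show a - (i + 1) + 1 = a - i by lia, Nat.sub_right_comm] at hchoose
      rw [← mul_assoc, hchoose]
      ring
    · simp [show a - i = 0 by lia, show a - b - i = 0 by lia]

lemma succ_mul_natCard_NCPart_forall_card_mem (S : Finset ℕ) (n : ℕ) :
    ((n + 1) * Nat.card {π : NCPart n // ∀ B ∈ π.1.parts, #B ∈ S} : ℤ) =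
      ((∑ c ∈ insert 0 S, X ^ c : ℤ[X]) ^ (n + 1)).coeff n := by
  have := succ_mul_eq_coeff_of_recurrence (mem_insert_self 0 S)
    (t := fun n d => #(partialNCs S n d)) (fun _ => card_partialNCs_zero_left)
    (fun _ => by rw [partialNCs_zero_right, card_empty]) (fun _ _ => card_partialNCs_succ) n 1
  rw [natCard_NCPart_forall_card_mem, this, pow_one, coeff_X_mul, Nat.cast_one, one_mul]

lemma maxBlockSize_le_iff {n k : ℕ} {π : NCPart n} :
    maxBlockSize π ≤ k ↔ ∀ B ∈ π.1.parts, #B ∈ range (k + 1) := by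
  simp [maxBlockSize]

lemma ite_choose_eq_centralBinom_mul (n i : ℕ) :
    (if i ≤ n then ((n + (n - i)).choose n : ℝ) else 0) =
      n.centralBinom * (n.descFactorial i / (2 * n).descFactorial i) := by
  split_ifs with h
  · have := choose_sub_mul_descFactorial (2 * n) n i
    rw [show 2 * n - i = n + (n - i) by lia, show 2 * n - n = n by lia,
      ← Nat.centralBinom_eq_two_mul_choose] at this
    rw [← mul_div_assoc, eq_div_iff]
    · exact_mod_cast this
    · exact_mod_cast (Nat.descFactorial_pos.2 (by lia)).ne'
  · simp [Nat.descFactorial_of_lt (not_le.1 h)]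

lemma succ_mul_natCard_maxBlockSize_le (n k : ℕ) :
    ((n + 1) * Nat.card {π : NCPart n // maxBlockSize π ≤ k} : ℝ) =
      n.centralBinom * ∑ j ∈ range (n + 2), (-1) ^ j * (n + 1).choose j *
        (n.descFactorial (j * (k + 1)) / (2 * n).descFactorial (j * (k + 1)) : ℝ) := by
  have h := succ_mul_natCard_NCPart_forall_card_mem (range (k + 1)) n
  rw [insert_eq_self.2 (by simp), coeff_geomSum_pow] at h
  simp only [← maxBlockSize_le_iff] at h
  have hℝ := congrArg (fun z : ℤ => (z : ℝ)) h
  push_cast at hℝ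
  simp only [hℝ, ite_choose_eq_centralBinom_mul, mul_sum, mul_left_comm]

lemma card_NCPart (n : ℕ) : Fintype.card (NCPart n) = catalan n := by
  have hall : Nat.card {π : NCPart n // maxBlockSize π ≤ n} = Fintype.card (NCPart n) := by
    rw [← Nat.card_eq_fintype_card]
    exact Nat.card_congr (Equiv.subtypeUnivEquiv fun π =>
      Finset.sup_le fun B _ => card_finset_fin_le B)
  have h := succ_mul_natCard_maxBlockSize_le n n
  rw [hall, sum_eq_single 0 (fun j _ hj => ?_) (by simp)] at h
  · simp only [pow_zero, Nat.choose_zero_right, zero_mul, Nat.descFactorial_zero, Nat.cast_one,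
      div_one, mul_one, ← succ_mul_catalan_eq_centralBinom] at h
    exact Nat.eq_of_mul_eq_mul_left n.succ_pos (by exact_mod_cast h)
  · have : n < j * (n + 1) := n.lt_succ_self.trans_le (Nat.le_mul_of_pos_left _ (by lia))
    simp [Nat.descFactorial_of_lt this]

/-- The probability that a uniformly random non-crossing partition of `[n]` has no block with more
than `k` elements. -/
noncomputable def probMaxBlockSizeLE (n k : ℕ) : ℝ :=
  Nat.card {π : NCPart n // maxBlockSize π ≤ k} / Fintype.card (NCPart n)

lemma probMaxBlockSizeLE_eq_sum (n k : ℕ) :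
    probMaxBlockSizeLE n k = ∑ j ∈ range (n + 2), (-1) ^ j * (n + 1).choose j *
      (n.descFactorial (j * (k + 1)) / (2 * n).descFactorial (j * (k + 1)) : ℝ) := by
  have h := succ_mul_natCard_maxBlockSize_le n k
  have hpos : (0 : ℝ) < Fintype.card (NCPart n) := by
    have := n.centralBinom_pos
    rw [← succ_mul_catalan_eq_centralBinom, ← card_NCPart] at this
    exact_mod_cast Nat.pos_of_mul_pos_left this
  rw [← succ_mul_catalan_eq_centralBinom, ← card_NCPart] at h
  rw [probMaxBlockSizeLE, div_eq_iff hpos.ne']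
  push_cast at h
  refine mul_left_cancel₀ (by positivity : (n + 1 : ℝ) ≠ 0) ?_
  linear_combination h

end Counting

section HalfDrawRatio

variable (n i : ℕ)

/-- The probability that `i` draws without replacement from a set of `2 * n` points all hit a given
half of it, divided by the probability `2⁻ⁱ` of the same event for draws with replacement. -/
noncomputable def halfDrawRatio : ℝ :=
  2 ^ i * (n.descFactorial i / (2 * n).descFactorial i)

lemma halfDrawRatio_zero : halfDrawRatio n 0 = 1 := by
  simp [halfDrawRatio]

lemma halfDrawRatio_succ :
    halfDrawRatio n (i + 1) = halfDrawRatio n i * (2 * (n - i : ℕ) / (2 * n - i : ℕ)) := by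
  simp only [halfDrawRatio, Nat.descFactorial_succ, pow_succ, Nat.cast_mul, mul_div_mul_comm]
  ring

lemma halfDrawRatio_nonneg : 0 ≤ halfDrawRatio n i := by
  unfold halfDrawRatio
  positivity

lemma halfDrawRatio_le_one : halfDrawRatio n i ≤ 1 := by
  induction i with
  | zero => rw [halfDrawRatio_zero]
  | succ i ih =>
    rw [halfDrawRatio_succ]
    refine mul_le_one₀ ih (by positivity) (div_le_one_of_le₀ ?_ (by positivity))
    exact_mod_cast (by lia : 2 * (n - i) ≤ 2 * n - i)

lemma succ_mul_one_sub_div_le :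
    (n + 1) * (1 - 2 * (n - i : ℕ) / (2 * n - i : ℕ) : ℝ) ≤ 2 * i + 1 := by
  rcases Nat.lt_or_ge i n with hi | hi
  · have hin : (i : ℝ) + 1 ≤ n := by exact_mod_cast hi
    rw [Nat.cast_sub hi.le, Nat.cast_sub (by lia), Nat.cast_mul, Nat.cast_ofNat,
      one_sub_div (by linarith), mul_div_assoc', div_le_iff₀ (by linarith)]
    nlinarith
  · have hin : (n : ℝ) ≤ i := by exact_mod_cast hi
    rw [Nat.sub_eq_zero_of_le hi, Nat.cast_zero, mul_zero, zero_div]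
    linarith [i.cast_nonneg (α := ℝ)]

lemma succ_mul_one_sub_halfDrawRatio_le : (n + 1) * (1 - halfDrawRatio n i) ≤ (i : ℝ) ^ 2 := by
  induction i with
  | zero => simp [halfDrawRatio_zero]
  | succ i ih =>
    set r : ℝ := 2 * (n - i : ℕ) / (2 * n - i : ℕ)
    calc (n + 1) * (1 - halfDrawRatio n (i + 1))
        = (n + 1) * (1 - halfDrawRatio n i) + halfDrawRatio n i * ((n + 1) * (1 - r)) := by
          rw [halfDrawRatio_succ]
          ring
      _ ≤ i ^ 2 + halfDrawRatio n i * (2 * i + 1) := by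
          gcongr
          · exact halfDrawRatio_nonneg n i
          · exact succ_mul_one_sub_div_le n i
      _ ≤ i ^ 2 + 1 * (2 * i + 1) := by
          gcongr
          exact halfDrawRatio_le_one n i
      _ = ((i + 1 : ℕ) : ℝ) ^ 2 := by
          push_cast
          ring

end HalfDrawRatio

section Asymptotics

open scoped Nat

lemma tendsto_tsum_pow_div_factorial_mul_sub_exp {ι : Type*} {l : Filter ι} {y : ι → ℝ}
    {w : ι → ℕ → ℝ} {L : ℝ} (hy : ∀ᶠ i in l, |y i| ≤ L)
    (hw : ∀ᶠ i in l, ∀ j, w i j ∈ Set.Icc 0 1)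
    (hlim : ∀ j, Tendsto (fun i => y i ^ j * (w i j - 1)) l (nhds 0)) :
    Tendsto (fun i => ∑' j, y i ^ j / j ! * w i j - Real.exp (y i)) l (nhds 0) := by
  have hdiff : ∀ᶠ i in l, ∑' j, y i ^ j / j ! * (w i j - 1) =
      ∑' j, y i ^ j / j ! * w i j - Real.exp (y i) := by
    filter_upwards [hw] with i hwi
    have hsum : Summable fun j => y i ^ j / j ! * w i j := by
      refine .of_norm_bounded (Real.summable_pow_div_factorial (y i)).norm fun j => ?_
      rw [norm_mul, Real.norm_of_nonneg (hwi j).1]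
      exact mul_le_of_le_one_right (norm_nonneg _) (hwi j).2
    rw [Real.exp_eq_exp_ℝ, NormedSpace.exp_eq_tsum_div,
      ← hsum.tsum_sub (Real.summable_pow_div_factorial (y i))]
    simp only [mul_sub_one]
  refine Tendsto.congr' hdiff ?_
  rw [← tsum_zero (β := ℕ)]
  refine tendsto_tsum_of_dominated_convergence (Real.summable_pow_div_factorial L) (fun j => ?_) ?_
  · simpa [div_mul_eq_mul_div] using (hlim j).div_const (j ! : ℝ)
  · filter_upwards [hy, hw] with i hyi hwi j
    rw [norm_mul, norm_div, norm_pow, Real.norm_eq_abs, RCLike.norm_natCast]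
    refine (mul_le_of_le_one_right (by positivity) ?_).trans (by gcongr)
    rw [Real.norm_eq_abs, abs_le]
    constructor <;> linarith [(hwi j).1, (hwi j).2]

end Asymptotics

section Limit

open scoped Nat

/-- The quotient of the `j`-th terms of two alternating series: the inclusion–exclusion formula
`probMaxBlockSizeLE_eq_sum` and the exponential series at `-(n + 1) / 2 ^ (k + 1)`. -/
noncomputable def expSeriesWeight (n k j : ℕ) : ℝ :=
  (n + 1).descFactorial j / (n + 1) ^ j * halfDrawRatio n (j * (k + 1))

lemma descFactorial_succ_div_pow_le_one (n j : ℕ) :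
    ((n + 1).descFactorial j / (n + 1) ^ j : ℝ) ≤ 1 :=
  div_le_one_of_le₀ (by exact_mod_cast Nat.descFactorial_le_pow _ _) (by positivity)

lemma tendsto_descFactorial_succ_div_pow (j : ℕ) :
    Tendsto (fun n : ℕ => ((n + 1).descFactorial j / (n + 1) ^ j : ℝ)) atTop (nhds 1) := by
  have hne : ∀ᶠ n : ℕ in atTop, (n : ℝ) ^ j ≠ 0 :=
    (eventually_gt_atTop 0).mono fun n hn => by positivity
  have h := (Asymptotics.isEquivalent_iff_tendsto_one hne).1 (isEquivalent_descFactorial j)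
  simpa [Function.comp_def] using h.comp (tendsto_add_atTop_nat 1)

lemma expSeriesWeight_mem_Icc (n k j : ℕ) : expSeriesWeight n k j ∈ Set.Icc 0 1 :=
  ⟨mul_nonneg (by positivity) (halfDrawRatio_nonneg _ _),
    mul_le_one₀ (descFactorial_succ_div_pow_le_one n j) (halfDrawRatio_nonneg _ _)
      (halfDrawRatio_le_one _ _)⟩

lemma pow_div_factorial_mul_expSeriesWeight (n k j : ℕ) :
    (-((n + 1) / 2 ^ (k + 1))) ^ j / j ! * expSeriesWeight n k j =
      (-1) ^ j * (n + 1).choose j *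
        (n.descFactorial (j * (k + 1)) / (2 * n).descFactorial (j * (k + 1)) : ℝ) := by
  rw [expSeriesWeight, halfDrawRatio, Nat.descFactorial_eq_factorial_mul_choose (n + 1), neg_pow,
    div_pow, ← pow_mul, mul_comm (k + 1)]
  push_cast
  field_simp

lemma probMaxBlockSizeLE_eq_tsum (n k : ℕ) : probMaxBlockSizeLE n k =
    ∑' j, (-((n + 1) / 2 ^ (k + 1))) ^ j / j ! * expSeriesWeight n k j := by
  simp only [probMaxBlockSizeLE_eq_sum, pow_div_factorial_mul_expSeriesWeight]
  refine (tsum_eq_sum fun j hj => ?_).symm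
  rw [Nat.choose_eq_zero_of_lt (not_lt.1 (mt mem_range.2 hj))]
  simp

lemma tendsto_atTop_of_div_two_pow_le {m : ℕ → ℕ} {L : ℝ}
    (hL : ∀ᶠ n : ℕ in atTop, (n : ℝ) / 2 ^ m n ≤ L) : Tendsto m atTop atTop := by
  refine tendsto_atTop.2 fun b => ?_
  filter_upwards [hL, tendsto_natCast_atTop_atTop.eventually_gt_atTop (L * 2 ^ b)] with n hn hLn
  by_contra! hlt
  have hL0 : 0 ≤ L := le_trans (by positivity) hn
  refine hLn.not_ge (((div_le_iff₀ (by positivity)).1 hn).trans ?_)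
  gcongr
  norm_num

lemma pow_mul_one_sub_expSeriesWeight_le {n k : ℕ} {L : ℝ} (hL : (n + 1) / 2 ^ (k + 1) ≤ L)
    (j : ℕ) : ((n + 1) / 2 ^ (k + 1)) ^ (j + 1) * (1 - expSeriesWeight n k (j + 1)) ≤
      L ^ (j + 1) * (1 - (n + 1).descFactorial (j + 1) / (n + 1) ^ (j + 1)) +
        L ^ j * (j + 1) ^ 2 * (((k + 1 : ℕ) : ℝ) ^ 2 / 2 ^ (k + 1)) := by
  set μ : ℝ := (n + 1) / 2 ^ (k + 1) with hμ
  set δ : ℝ := (n + 1).descFactorial (j + 1) / (n + 1) ^ (j + 1)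
  set q := halfDrawRatio n ((j + 1) * (k + 1))
  have hμ0 : 0 ≤ μ := by positivity
  have hL0 : 0 ≤ L := hμ0.trans hL
  have hδ : 0 ≤ 1 - δ := sub_nonneg.2 (descFactorial_succ_div_pow_le_one n (j + 1))
  have hq0 : 0 ≤ q := halfDrawRatio_nonneg _ _
  have hq1 : q ≤ 1 := halfDrawRatio_le_one _ _
  have : 0 ≤ 1 - q := sub_nonneg.2 hq1
  have hq : (n + 1) * (1 - q) ≤ (((j + 1) * (k + 1) : ℕ) : ℝ) ^ 2 :=
    succ_mul_one_sub_halfDrawRatio_le n _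
  calc μ ^ (j + 1) * (1 - δ * q)
      = μ ^ (j + 1) * ((1 - δ) * q) + μ ^ j * ((n + 1) * (1 - q) / 2 ^ (k + 1)) := by
        rw [pow_succ, hμ]
        ring
    _ ≤ L ^ (j + 1) * ((1 - δ) * 1) +
          L ^ j * ((((j + 1) * (k + 1) : ℕ) : ℝ) ^ 2 / 2 ^ (k + 1)) := by
        gcongr
    _ = _ := by
        push_cast
        ring

lemma tendsto_pow_mul_expSeriesWeight_sub_one {k : ℕ → ℕ} {L : ℝ}
    (hL : ∀ᶠ n : ℕ in atTop, ((n + 1) / 2 ^ (k n + 1) : ℝ) ≤ L)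
    (hk : Tendsto k atTop atTop) (j : ℕ) :
    Tendsto (fun n : ℕ => (-((n + 1) / 2 ^ (k n + 1)) : ℝ) ^ j * (expSeriesWeight n (k n) j - 1))
      atTop (nhds 0) := by
  rcases j with _ | j
  · simp [expSeriesWeight, halfDrawRatio]
  have hpow : Tendsto (fun n => ((k n + 1 : ℕ) : ℝ) ^ 2 / 2 ^ (k n + 1)) atTop (nhds 0) :=
    (tendsto_pow_const_div_const_pow_of_one_lt 2 one_lt_two).comp
      ((tendsto_add_atTop_nat 1).comp hk)
  have hbound := (((tendsto_descFactorial_succ_div_pow (j + 1)).const_sub 1).const_mul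
    (L ^ (j + 1))).add (hpow.const_mul (L ^ j * (j + 1) ^ 2))
  rw [sub_self, mul_zero, mul_zero, add_zero] at hbound
  refine squeeze_zero_norm' ?_ hbound
  filter_upwards [hL] with n hn
  refine le_trans (le_of_eq ?_) (pow_mul_one_sub_expSeriesWeight_le hn j)
  rw [norm_mul, norm_pow, norm_neg, norm_sub_rev, Real.norm_of_nonneg (by positivity),
    Real.norm_of_nonneg (sub_nonneg.2 (expSeriesWeight_mem_Icc _ _ _).2)]

lemma tendsto_probMaxBlockSizeLE_sub_exp {k : ℕ → ℕ} {L : ℝ}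
    (hL : ∀ᶠ n : ℕ in atTop, (n : ℝ) / 2 ^ (k n + 1) ≤ L) :
    Tendsto (fun n => probMaxBlockSizeLE n (k n) - Real.exp (-((n + 1) / 2 ^ (k n + 1))))
      atTop (nhds 0) := by
  have hk : Tendsto k atTop atTop := by
    simpa [Function.comp_def] using
      (tendsto_sub_atTop_nat 1).comp (tendsto_atTop_of_div_two_pow_le hL)
  have hμ : ∀ᶠ n : ℕ in atTop, ((n + 1) / 2 ^ (k n + 1) : ℝ) ≤ L + 1 := by
    filter_upwards [hL] with n hn
    rw [add_div]
    exact add_le_add hn (div_le_one_of_le₀ (one_le_pow₀ one_le_two) (by positivity))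
  simp only [probMaxBlockSizeLE_eq_tsum]
  refine tendsto_tsum_pow_div_factorial_mul_sub_exp (L := L + 1) ?_
    (.of_forall fun n => expSeriesWeight_mem_Icc n (k n))
    (tendsto_pow_mul_expSeriesWeight_sub_one hμ hk)
  filter_upwards [hμ] with n hn
  rwa [abs_neg, abs_of_nonneg (by positivity)]

lemma tendsto_exp_mul_probMaxBlockSizeLE {k : ℕ → ℕ} {L : ℝ}
    (hL : ∀ᶠ n : ℕ in atTop, (n : ℝ) / 2 ^ (k n + 1) ≤ L) :
    Tendsto (fun n : ℕ => Real.exp (n / 2 ^ (k n + 1)) * probMaxBlockSizeLE n (k n))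
      atTop (nhds 1) := by
  have hk : Tendsto (fun n => k n + 1) atTop atTop := tendsto_atTop_of_div_two_pow_le hL
  have hbdd : ∀ᶠ n : ℕ in atTop, |Real.exp (n / 2 ^ (k n + 1))| ≤ Real.exp L := by
    simpa using hL
  have herror := bdd_le_mul_tendsto_zero' _ hbdd (tendsto_probMaxBlockSizeLE_sub_exp hL)
  have hexp : Tendsto (fun n => Real.exp (-((2 : ℝ) ^ (k n + 1))⁻¹)) atTop (nhds 1) := by
    rw [← Real.exp_zero, ← neg_zero]
    exact (Real.continuous_exp.tendsto _).comp
      ((tendsto_pow_atTop_atTop_of_one_lt one_lt_two).comp hk).inv_tendsto_atTop.neg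
  refine zero_add (1 : ℝ) ▸ (herror.add hexp).congr fun n => ?_
  rw [mul_sub, ← Real.exp_add, sub_add_eq_add_sub, add_sub_assoc, add_eq_left, sub_eq_zero]
  congr 1
  ring

theorem maxBlockSize_doubleExponential_general {k : ℕ → ℤ}
    (hk : IsBoundedUnder (· ≤ ·) atTop fun n : ℕ => (n : ℝ) * 2 ^ (-(k n + 1))) :
    Tendsto (fun n : ℕ => Real.exp (n * 2 ^ (-(k n + 1))) *
      (Nat.card {π : NCPart n // (maxBlockSize π : ℤ) ≤ k n} / Fintype.card (NCPart n)))
      atTop (nhds 1) := by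
  obtain ⟨L, hL⟩ := hk.eventually_le
  have hk_nonneg : ∀ᶠ n in atTop, 0 ≤ k n := by
    filter_upwards [hL, tendsto_natCast_atTop_atTop.eventually_gt_atTop L] with n hn hLn
    by_contra! hneg
    have : (1 : ℝ) ≤ 2 ^ (-(k n + 1)) := one_le_zpow₀ one_le_two (by lia)
    nlinarith [n.cast_nonneg (α := ℝ)]
  have hpow : ∀ᶠ n : ℕ in atTop,
      (n : ℝ) / 2 ^ ((k n).toNat + 1) = n * 2 ^ (-(k n + 1)) := by
    filter_upwards [hk_nonneg] with n hn
    conv_rhs => rw [← Int.toNat_of_nonneg hn]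
    rw [zpow_neg, div_eq_mul_inv]
    norm_cast
  have hlim := tendsto_exp_mul_probMaxBlockSizeLE (k := fun n => (k n).toNat) (L := L)
    (by filter_upwards [hL, hpow] with n hn hpow_n using hpow_n.trans_le hn)
  refine hlim.congr' ?_
  filter_upwards [hk_nonneg, hpow] with n hn hpow_n
  simp only [hpow_n, probMaxBlockSizeLE, Int.le_toNat hn]

end Limit

end

/-- Double-exponential law for the largest block: fix `x : ℤ`, and set
`k(n) = ⌊log₂ n⌋ + x` and `α(n) = n/2^{⌊log₂ n⌋} ∈ [1,2)`.  Then
`P[L_n ≤ k(n)] = exp(−α(n)·2^{−(x+1)})·(1 + o(1))`, i.e.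
`exp(α(n)·2^{−(x+1)})·P[L_n ≤ k(n)] → 1` as `n → ∞`.
(Here `⌊log₂ n⌋ = Nat.log 2 n` for `n ≥ 1`.) -/
theorem maxBlockSize_doubleExponential (x : ℤ) :
    Tendsto
      (fun n : ℕ =>
        Real.exp (((n : ℝ) / 2 ^ (Nat.log 2 n)) * (2 : ℝ) ^ (-(x + 1))) *
          ((Nat.card {π : NCPart n //
              (maxBlockSize π : ℤ) ≤ (Nat.log 2 n : ℤ) + x} : ℝ) /
            (Fintype.card (NCPart n) : ℝ)))
      atTop (nhds 1) := by
  have hscale (n : ℕ) : (n : ℝ) / 2 ^ Nat.log 2 n * 2 ^ (-(x + 1)) =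
      n * 2 ^ (-((Nat.log 2 n : ℤ) + x + 1)) := by
    rw [add_assoc, neg_add (Nat.log 2 n : ℤ), zpow_add₀ two_ne_zero, zpow_neg _ (Nat.log 2 n : ℤ),
      zpow_natCast]
    ring
  have hbdd : IsBoundedUnder (· ≤ ·) atTop
      fun n : ℕ => (n : ℝ) * 2 ^ (-((Nat.log 2 n : ℤ) + x + 1)) := by
    refine isBoundedUnder_of ⟨2 * 2 ^ (-(x + 1)), fun n => ?_⟩
    rw [← hscale]
    gcongr
    rw [div_le_iff₀ (by positivity), ← pow_succ']
    exact_mod_cast (Nat.lt_pow_succ_log_self one_lt_two n).le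
  simpa only [hscale] using maxBlockSize_doubleExponential_general hbdd
end

section
/- Fix an integer k ≥ 1. For m ≥ 1 let a_m be the number of non-crossing partitions of [m] all of whose blocks have size at most k, and set a_0 = 1. Let y(z) = Σ_{m≥0} a_m z^{m+1}, a formal power series over ℚ with zero constant term. Then y satisfies the polynomial equation y = z + y² − z·y^{k+1}. -/
/-- `a_m`: the number of non-crossing partitions of `[m]` all of whose blocks have size at
most `k` (for `m = 0` this equals `1`, corresponding to the empty partition). -/
noncomputable def countBounded (k m : ℕ) : ℕ :=
  Nat.card {π : NCPart m // ∀ B ∈ π.1.parts, B.card ≤ k}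

/-- The formal power series `y(z) = Σ_{m≥0} a_m z^{m+1}` over `ℚ`. -/
noncomputable def boundedGF (k : ℕ) : PowerSeries ℚ :=
  PowerSeries.X * PowerSeries.mk fun m => (countBounded k m : ℚ)

/-!
Deleting the least element `a` of a non-crossing partition of `[a, b)` cuts it in two. If `p` is the
next element of the block of `a` (or `p = b` if there is none), what remains is a non-crossing
partition of the gap between `a` and `p`, and one of `[p, b)` whose first block is the old first
block without `a`; any two such partitions arise. Hence the generating functions `u_j` of the
partitions with all blocks of size at most `k` and first block of size at most `j` satisfy `u_0 = 1`
and `u_{j+1} = 1 + z C u_j` for `j < k`, where `C = u_k` and `y = z C`. So `C = 1 + y + ⋯ + y^k`,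
and multiplying by `z (1 - y)` gives `y - y² = z (1 - y^{k+1})`.
-/

open Finset PowerSeries

namespace NCPart

/-- `IsBlockMax a b g` says that `g` sends every element of the interval `[a, b)` to the maximum
of its block, for some non-crossing partition of `[a, b)`; such a `g` determines the partition.
Outside the interval `g` is the identity, so that maps on different intervals have the same type
and can be cut and glued without casts. -/
structure IsBlockMax (a b : ℕ) (g : ℕ → ℕ) : Prop where
  le_apply : ∀ x, x ≤ g x
  apply_apply : ∀ x, g (g x) = g x
  apply_le_apply : ∀ x y, x < y → y < g x → g y ≤ g x
  apply_eq_self : ∀ x, x < a ∨ b ≤ x → g x = x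
  apply_lt : ∀ x, x < b → g x < b

/-- The size of the block with maximum `v` in the partition of `[a, b)` described by `g`; it is `0`
if `v` is not the maximum of a block. -/
def blockCard (a b : ℕ) (g : ℕ → ℕ) (v : ℕ) : ℕ := #{x ∈ Ico a b | g x = v}

variable {a b p k j : ℕ} {g g₁ g₂ : ℕ → ℕ}

theorem finite_setOf_isBlockMax (a b : ℕ) : {g | IsBlockMax a b g}.Finite := by
  let toFin (g : {g | IsBlockMax a b g}) (x : Fin b) : Fin b := ⟨g.1 x, g.2.apply_lt x x.2⟩
  refine Finite.of_injective toFin fun g h hgh => Subtype.ext <| funext fun x => ?_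
  obtain hx | hx := lt_or_ge x b
  · exact congrArg Fin.val (congrFun hgh ⟨x, hx⟩)
  · rw [g.2.apply_eq_self x (.inr hx), h.2.apply_eq_self x (.inr hx)]

open Classical in
/-- The non-crossing partitions of `[a, b)`, encoded by their block maxima, in which all blocks
have at most `k` elements and the block of `a` has at most `j`. For `j = k` the second condition is
void; the others arise by removing the least elements of the first block one at a time. -/
noncomputable def boundedBlockMax (k j a b : ℕ) : Finset (ℕ → ℕ) :=
  {g ∈ (finite_setOf_isBlockMax a b).toFinset |
    (∀ v, blockCard a b g v ≤ k) ∧ blockCard a b g (g a) ≤ j}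

theorem mem_boundedBlockMax : g ∈ boundedBlockMax k j a b ↔
    IsBlockMax a b g ∧ (∀ v, blockCard a b g v ≤ k) ∧ blockCard a b g (g a) ≤ j := by
  simp [boundedBlockMax]

theorem mem_boundedBlockMax_self :
    g ∈ boundedBlockMax k k a b ↔ IsBlockMax a b g ∧ ∀ v, blockCard a b g v ≤ k := by
  rw [mem_boundedBlockMax]
  exact ⟨fun h => ⟨h.1, h.2.1⟩, fun h => ⟨h.1, h.2, h.2 _⟩⟩

theorem blockCard_eq_zero {v : ℕ} (h : ∀ x, a ≤ x → x < b → g x ≠ v) : blockCard a b g v = 0 := by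
  simpa [blockCard, Finset.filter_eq_empty_iff] using h

theorem blockCard_congr {v : ℕ} (h : ∀ x, a ≤ x → x < b → g₁ x = g₂ x) :
    blockCard a b g₁ v = blockCard a b g₂ v := by
  refine congrArg card (filter_congr fun x hx => ?_)
  rw [h x (mem_Ico.1 hx).1 (mem_Ico.1 hx).2]

theorem blockCard_add_blockCard (hap : a ≤ p) (hpb : p ≤ b) (g : ℕ → ℕ) (v : ℕ) :
    blockCard a p g v + blockCard p b g v = blockCard a b g v := by
  rw [blockCard, blockCard, blockCard, ← Ico_union_Ico_eq_Ico hap hpb, filter_union,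
    card_union_of_disjoint (disjoint_filter_filter (Ico_disjoint_Ico_consecutive a p b))]

theorem blockCard_add_one (a : ℕ) (g : ℕ → ℕ) (v : ℕ) :
    blockCard a (a + 1) g v = if g a = v then 1 else 0 := by
  rw [blockCard, Nat.Ico_succ_singleton, filter_singleton]
  split_ifs <;> rfl

theorem one_le_blockCard_apply (hab : a < b) (g : ℕ → ℕ) : 1 ≤ blockCard a b g (g a) :=
  card_pos.2 ⟨a, by simpa using hab⟩

theorem boundedBlockMax_self (k j a : ℕ) : boundedBlockMax k j a a = {id} := by
  ext g
  rw [mem_boundedBlockMax, mem_singleton]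
  refine ⟨fun h => funext fun x => h.1.apply_eq_self x (by omega), ?_⟩
  rintro rfl
  exact ⟨⟨fun _ => le_rfl, fun _ => rfl, fun _ _ _ => le_of_lt, fun _ _ => rfl, fun _ => id⟩,
    by simp [blockCard]⟩

theorem boundedBlockMax_zero (k : ℕ) (hab : a < b) : boundedBlockMax k 0 a b = ∅ := by
  refine eq_empty_of_forall_notMem fun g hg => ?_
  have := one_le_blockCard_apply hab g
  have := (mem_boundedBlockMax.1 hg).2.2
  omega

/-- The map agreeing with `g` on `[a, b)` and with the identity elsewhere. -/
def restrict (a b : ℕ) (g : ℕ → ℕ) (x : ℕ) : ℕ := if a ≤ x ∧ x < b then g x else x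

/-- The block maxima of the partition of `[a, b)` obtained from `g₁` on `[a + 1, p)` and `g₂` on
`[p, b)` by adding `a` to the block of `p`, or as a singleton if `p = b`. -/
def glue (a p b : ℕ) (g₁ g₂ : ℕ → ℕ) (x : ℕ) : ℕ :=
  if x = a then (if p < b then g₂ p else a) else if x < p then g₁ x else g₂ x

/-- The second smallest element of the block of `a` in the partition of `[a, b)` described by `g`,
or `b` if that block is `{a}`. -/
noncomputable def next (a b : ℕ) (g : ℕ → ℕ) : ℕ := sInf {p | a < p ∧ (p < b → g p = g a)}

theorem isLeast_next (hab : a < b) (g : ℕ → ℕ) :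
    IsLeast {p | a < p ∧ (p < b → g p = g a)} (next a b g) :=
  ⟨Nat.sInf_mem ⟨b, hab, fun h => absurd h (lt_irrefl b)⟩, fun _ h => Nat.sInf_le h⟩

theorem next_mem_Ioc (hab : a < b) (g : ℕ → ℕ) : next a b g ∈ Ioc a b :=
  mem_Ioc.2 ⟨(isLeast_next hab g).1.1,
    (isLeast_next hab g).2 ⟨hab, fun h => absurd h (lt_irrefl b)⟩⟩

theorem apply_ne_of_lt_next {x : ℕ} (hab : a < b) (hax : a < x) (hx : x < next a b g) :
    g x ≠ g a :=
  fun h => hx.not_ge ((isLeast_next hab g).2 ⟨hax, fun _ => h⟩)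

theorem glue_eq_left {x : ℕ} (hax : a < x) (hxp : x < p) : glue a p b g₁ g₂ x = g₁ x := by
  rw [glue, if_neg hax.ne', if_pos hxp]

theorem glue_eq_right {x : ℕ} (hap : a < p) (hpx : p ≤ x) : glue a p b g₁ g₂ x = g₂ x := by
  rw [glue, if_neg (hap.trans_le hpx).ne', if_neg hpx.not_gt]

theorem isBlockMax_restrict {c d : ℕ} (hg : IsBlockMax a b g)
    (hlt : ∀ x, c ≤ x → x < d → g x < d) : IsBlockMax c d (restrict c d g) := by
  obtain ⟨hle, happ, hnc, -, -⟩ := hg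
  constructor <;> grind [restrict]

theorem glue_eq_self_of_lt {x : ℕ} (h₁ : IsBlockMax (a + 1) p g₁) (hxp : x < p) (hxa : x < a) :
    glue a p b g₁ g₂ x = x := by
  rw [glue, if_neg hxa.ne, if_pos hxp, h₁.apply_eq_self x (.inl (Nat.lt_succ_of_lt hxa))]

theorem glue_self_of_lt (hpb : p < b) : glue a p b g₁ g₂ a = g₂ p := by
  rw [glue, if_pos rfl, if_pos hpb]

theorem glue_self_right (a b : ℕ) (g₁ g₂ : ℕ → ℕ) : glue a b b g₁ g₂ a = a := by
  rw [glue, if_pos rfl, if_neg (lt_irrefl b)]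

theorem le_glue_apply (hap : a < p) (h₁ : IsBlockMax (a + 1) p g₁) (h₂ : IsBlockMax p b g₂)
    (x : ℕ) : x ≤ glue a p b g₁ g₂ x := by
  have := h₁.le_apply x
  have := h₂.le_apply x
  have := h₂.le_apply p
  grind [glue]

theorem glue_apply_lt_of_lt {x : ℕ} (h₁ : IsBlockMax (a + 1) p g₁) (hax : a < x) (hxp : x < p) :
    glue a p b g₁ g₂ x < p :=
  glue_eq_left (g₂ := g₂) hax hxp ▸ h₁.apply_lt x hxp

theorem glue_apply_le_glue_apply {x y : ℕ} (hap : a < p) (hpb : p ≤ b)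
    (h₁ : IsBlockMax (a + 1) p g₁) (h₂ : IsBlockMax p b g₂) (hxy : x < y)
    (hy : y < glue a p b g₁ g₂ x) : glue a p b g₁ g₂ y ≤ glue a p b g₁ g₂ x := by
  obtain hxa | rfl | hax := lt_trichotomy x a
  · rw [glue_eq_self_of_lt h₁ (hxa.trans hap) hxa] at hy
    omega
  · obtain hpb | rfl := hpb.lt_or_eq
    · rw [glue_self_of_lt hpb] at hy ⊢
      obtain hyp | rfl | hpy := lt_trichotomy y p
      · exact (glue_apply_lt_of_lt h₁ hxy hyp).le.trans (h₂.le_apply p)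
      · rw [glue_eq_right hap le_rfl]
      · rw [glue_eq_right hap hpy.le]
        exact h₂.apply_le_apply p y hpy hy
    · rw [glue_self_right] at hy
      omega
  obtain hxp | hpx := lt_or_ge x p
  · have hyp : y < p := hy.trans (glue_apply_lt_of_lt h₁ hax hxp)
    rw [glue_eq_left hax hxp] at hy ⊢
    rw [glue_eq_left (hax.trans hxy) hyp]
    exact h₁.apply_le_apply x y hxy hy
  · rw [glue_eq_right hap hpx] at hy ⊢
    rw [glue_eq_right hap (hpx.trans hxy.le)]
    exact h₂.apply_le_apply x y hxy hy

theorem isBlockMax_glue (hap : a < p) (hpb : p ≤ b) (h₁ : IsBlockMax (a + 1) p g₁)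
    (h₂ : IsBlockMax p b g₂) : IsBlockMax a b (glue a p b g₁ g₂) := by
  refine ⟨le_glue_apply hap h₁ h₂, fun x => ?_, fun x y => glue_apply_le_glue_apply hap hpb h₁ h₂,
    fun x hx => ?_, fun x hx => ?_⟩
  · have := h₁.le_apply x
    have := h₁.apply_lt x
    have := h₁.apply_eq_self x
    have := h₁.apply_apply x
    have := h₂.le_apply x
    have := h₂.apply_apply x
    have := h₂.apply_apply p
    have := h₂.le_apply p
    grind [glue]
  · have := h₁.apply_eq_self x
    have := h₂.apply_eq_self x
    grind [glue]
  · have := h₁.apply_lt x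
    have := h₁.apply_eq_self x
    have := h₂.apply_lt x hx
    have := h₂.apply_lt p
    grind [glue]

theorem IsBlockMax.glue_apply_ne {x : ℕ} (h₁ : IsBlockMax (a + 1) p g₁) (h₂ : IsBlockMax p b g₂)
    (hax : a < x) (hxp : x < p) : glue a p b g₁ g₂ x ≠ glue a p b g₁ g₂ a := by
  have := h₁.le_apply x
  have := h₁.apply_lt x hxp
  have := h₂.le_apply p
  grind [glue]

theorem next_glue (hap : a < p) (hpb : p ≤ b) (h₁ : IsBlockMax (a + 1) p g₁)
    (h₂ : IsBlockMax p b g₂) : next a b (glue a p b g₁ g₂) = p := by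
  refine IsLeast.csInf_eq ⟨⟨hap, fun h => ?_⟩, fun x hx => ?_⟩
  · rw [glue_eq_right hap le_rfl, glue_self_of_lt h]
  · by_contra! hxp
    exact h₁.glue_apply_ne h₂ hx.1 hxp (hx.2 (hxp.trans_le hpb))

theorem IsBlockMax.restrict_eq_self (hg : IsBlockMax a b g) : restrict a b g = g := by
  funext x
  have := hg.apply_eq_self x
  grind [restrict]

theorem restrict_congr (h : ∀ x, a ≤ x → x < b → g₁ x = g₂ x) :
    restrict a b g₁ = restrict a b g₂ := by
  funext x
  grind [restrict]

theorem restrict_glue_left (h₁ : IsBlockMax (a + 1) p g₁) :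
    restrict (a + 1) p (glue a p b g₁ g₂) = g₁ :=
  (restrict_congr fun _ hax hxp => glue_eq_left hax hxp).trans h₁.restrict_eq_self

theorem restrict_glue_right (hap : a < p) (h₂ : IsBlockMax p b g₂) :
    restrict p b (glue a p b g₁ g₂) = g₂ :=
  (restrict_congr fun _ hpx _ => glue_eq_right hap hpx).trans h₂.restrict_eq_self

theorem IsBlockMax.apply_lt_next {x : ℕ} (hg : IsBlockMax a b g) (hab : a < b) (hax : a < x)
    (hx : x < next a b g) : g x < next a b g := by
  obtain ⟨-, hpb⟩ := mem_Ioc.1 (next_mem_Ioc hab g)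
  have hp := (isLeast_next hab g).1.2
  have hne := apply_ne_of_lt_next hab hax hx
  generalize next a b g = p at *
  by_contra! hpx
  have hp := hp (hpx.trans_lt (hg.apply_lt x (hx.trans_le hpb)))
  obtain rfl | hpx := hpx.eq_or_lt
  · exact hne ((hg.apply_apply x).symm.trans hp)
  · have hax' : g a ≤ g x := hp ▸ hg.apply_le_apply x p hx hpx
    have hxa : g x ≤ g a := hg.apply_le_apply a x hax (hp ▸ hx.trans_le (hg.le_apply p))
    exact hne (hxa.antisymm hax')

theorem IsBlockMax.glue_restrict (hg : IsBlockMax a b g) (hab : a < b) :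
    glue a (next a b g) b (restrict (a + 1) (next a b g) g)
      (restrict (next a b g) b g) = g := by
  obtain ⟨hap, hpb⟩ := mem_Ioc.1 (next_mem_Ioc hab g)
  have hp := (isLeast_next hab g).1.2
  have hga : ¬ next a b g < b → g a = a := by
    intro hnb
    by_contra hne
    have hag := (hg.le_apply a).lt_of_ne' hne
    have hlt := (hg.apply_lt a hab).trans_le (not_lt.1 hnb)
    exact apply_ne_of_lt_next hab hag hlt (hg.apply_apply a)
  generalize next a b g = p at *
  funext x
  have := hg.apply_eq_self x
  grind [glue, restrict]

theorem blockCard_glue (hap : a < p) (hpb : p ≤ b) (g₁ g₂ : ℕ → ℕ) (v : ℕ) :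
    blockCard a b (glue a p b g₁ g₂) v = (if glue a p b g₁ g₂ a = v then 1 else 0) +
      blockCard (a + 1) p g₁ v + blockCard p b g₂ v := by
  rw [← blockCard_add_blockCard (hap.le) hpb, ← blockCard_add_blockCard (Nat.le_succ a) hap,
    Nat.succ_eq_add_one, blockCard_add_one, blockCard_congr fun x => glue_eq_left,
    blockCard_congr fun x hpx _ => glue_eq_right hap hpx]

theorem glue_mem_boundedBlockMax_iff (hap : a < p) (hpb : p ≤ b) (hjk : j < k)
    (h₁ : IsBlockMax (a + 1) p g₁) (h₂ : IsBlockMax p b g₂) :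
    glue a p b g₁ g₂ ∈ boundedBlockMax k (j + 1) a b ↔
      g₁ ∈ boundedBlockMax k k (a + 1) p ∧ g₂ ∈ boundedBlockMax k j p b := by
  -- The two pieces share no block maximum, so each block size comes from only one of them.
  have hleft : ∀ v, v ≤ a ∨ p ≤ v → blockCard (a + 1) p g₁ v = 0 := fun v hv =>
    blockCard_eq_zero fun x hax hxp => by
      have := h₁.le_apply x
      have := h₁.apply_lt x hxp
      omega
  have hright : ∀ v, v < p → blockCard p b g₂ v = 0 := fun v hv =>
    blockCard_eq_zero fun x hpx _ => by
      have := h₂.le_apply x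
      omega
  have hle := h₂.le_apply p
  simp only [mem_boundedBlockMax_self, mem_boundedBlockMax, h₁, h₂, isBlockMax_glue hap hpb h₁ h₂,
    true_and, blockCard_glue hap hpb]
  obtain hp | rfl := hpb.lt_or_eq
  · rw [glue_self_of_lt hp]
    grind
  · have hempty : ∀ v, blockCard p p g₂ v = 0 := fun v => blockCard_eq_zero (by omega)
    rw [glue_self_right]
    grind

theorem card_filter_next_eq (hap : a < p) (hpb : p ≤ b) (hjk : j < k) :
    #{g ∈ boundedBlockMax k (j + 1) a b | next a b g = p} =
      #(boundedBlockMax k k (a + 1) p) * #(boundedBlockMax k j p b) := by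
  rw [← card_product]
  have hab : a < b := hap.trans_le hpb
  refine card_nbij' (fun g => (restrict (a + 1) p g, restrict p b g)) (fun g => glue a p b g.1 g.2)
    ?_ ?_ ?_ ?_
  · intro g hg
    obtain ⟨hgk, rfl⟩ := mem_filter.1 (mem_coe.1 hg)
    have hgb := (mem_boundedBlockMax.1 hgk).1
    have h₁ := isBlockMax_restrict hgb fun x hax hxp => hgb.apply_lt_next hab hax hxp
    have h₂ := isBlockMax_restrict (c := next a b g) hgb fun x _ hxb => hgb.apply_lt x hxb
    rw [mem_coe, mem_product, ← glue_mem_boundedBlockMax_iff hap hpb hjk h₁ h₂,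
      hgb.glue_restrict hab]
    exact hgk
  · rintro ⟨g₁, g₂⟩ hg
    obtain ⟨hg₁, hg₂⟩ := mem_product.1 hg
    have h₁ := (mem_boundedBlockMax.1 hg₁).1
    have h₂ := (mem_boundedBlockMax.1 hg₂).1
    exact mem_filter.2 ⟨(glue_mem_boundedBlockMax_iff hap hpb hjk h₁ h₂).2 ⟨hg₁, hg₂⟩,
      next_glue hap hpb h₁ h₂⟩
  · intro g hg
    obtain ⟨hgk, rfl⟩ := mem_filter.1 (mem_coe.1 hg)
    exact (mem_boundedBlockMax.1 hgk).1.glue_restrict hab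
  · rintro ⟨g₁, g₂⟩ hg
    obtain ⟨hg₁, hg₂⟩ := mem_product.1 hg
    exact Prod.ext (restrict_glue_left (mem_boundedBlockMax.1 hg₁).1)
      (restrict_glue_right hap (mem_boundedBlockMax.1 hg₂).1)

theorem card_boundedBlockMax_succ (hjk : j < k) (a n : ℕ) :
    #(boundedBlockMax k (j + 1) a (a + (n + 1))) = ∑ i ∈ antidiagonal n,
      #(boundedBlockMax k k (a + 1) (a + 1 + i.1)) *
        #(boundedBlockMax k j (a + 1 + i.1) (a + 1 + i.1 + i.2)) := by
  have hab : a < a + (n + 1) := by omega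
  rw [card_eq_sum_card_fiberwise fun g _ => next_mem_Ioc hab g]
  refine (sum_nbij' (fun i => a + 1 + i.1) (fun p => (p - (a + 1), a + (n + 1) - p))
    ?_ ?_ ?_ ?_ fun i hi => ?_).symm <;>
    simp only [mem_Ioc, HasAntidiagonal.mem_antidiagonal, Prod.forall, Prod.mk.injEq] at *
  iterate 4 omega
  rw [card_filter_next_eq (by omega) (by omega) hjk,
    show a + 1 + i.1 + i.2 = a + (n + 1) by omega]

theorem card_boundedBlockMax_zero (k a n : ℕ) :
    #(boundedBlockMax k 0 a (a + n)) = if n = 0 then 1 else 0 := by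
  split_ifs with hn
  · rw [hn, add_zero, boundedBlockMax_self, card_singleton]
  · rw [boundedBlockMax_zero k (by omega), card_empty]

theorem card_boundedBlockMax_add (k n : ℕ) : ∀ j ≤ k, ∀ a,
    #(boundedBlockMax k j a (a + n)) = #(boundedBlockMax k j 0 n) := by
  induction n using Nat.strong_induction_on with
  | _ n ih =>
    rintro (_ | j) hjk a
    · rw [card_boundedBlockMax_zero, ← zero_add n, card_boundedBlockMax_zero, zero_add]
    obtain _ | n := n
    · rw [add_zero, boundedBlockMax_self, boundedBlockMax_self]
    have hzero := card_boundedBlockMax_succ hjk 0 n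
    rw [zero_add (n + 1)] at hzero
    rw [card_boundedBlockMax_succ hjk a n, hzero]
    refine sum_congr rfl fun i hi => ?_
    have hi := HasAntidiagonal.mem_antidiagonal.1 hi
    rw [ih i.1 (by omega) k le_rfl, ih i.1 (by omega) k le_rfl, ih i.2 (by omega) j (by omega),
      ih i.2 (by omega) j (by omega)]

/-- The generating function, by the size of the ground set, of the non-crossing partitions with all
blocks of size at most `k` and first block of size at most `j`. -/
noncomputable def boundedBlockMaxGF (R : Type*) [Semiring R] (k j : ℕ) : R⟦X⟧ :=
  PowerSeries.mk fun n => (#(boundedBlockMax k j 0 n) : R)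

theorem boundedBlockMaxGF_zero (R : Type*) [Semiring R] (k : ℕ) : boundedBlockMaxGF R k 0 = 1 := by
  ext n
  have h := card_boundedBlockMax_zero k 0 n
  rw [zero_add] at h
  rw [boundedBlockMaxGF, coeff_mk, h, coeff_one]
  split_ifs <;> simp

theorem boundedBlockMaxGF_succ (R : Type*) [Semiring R] (hjk : j < k) :
    boundedBlockMaxGF R k (j + 1) =
      X * boundedBlockMaxGF R k k * boundedBlockMaxGF R k j + 1 := by
  ext n
  rw [mul_assoc, map_add, coeff_one, boundedBlockMaxGF, coeff_mk]
  obtain _ | n := n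
  · simp [boundedBlockMax_self]
  · have h := card_boundedBlockMax_succ hjk 0 n
    rw [zero_add (n + 1)] at h
    rw [h, coeff_succ_X_mul, coeff_mul, if_neg n.succ_ne_zero, add_zero, Nat.cast_sum]
    refine sum_congr rfl fun i _ => ?_
    rw [card_boundedBlockMax_add k i.1 k le_rfl, card_boundedBlockMax_add k i.2 j hjk.le,
      Nat.cast_mul, boundedBlockMaxGF, boundedBlockMaxGF, coeff_mk, coeff_mk]

theorem boundedBlockMaxGF_eq_geom_sum (R : Type*) [Semiring R] (hjk : j ≤ k) :
    boundedBlockMaxGF R k j = ∑ i ∈ range (j + 1), (X * boundedBlockMaxGF R k k) ^ i := by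
  induction j with
  | zero => rw [boundedBlockMaxGF_zero, zero_add, sum_range_one, pow_zero]
  | succ j ih => rw [boundedBlockMaxGF_succ R hjk, ih (Nat.le_of_succ_le hjk),
    ← geom_sum_succ]

section Finpartition

variable {m : ℕ} (P : Finpartition (univ : Finset (Fin m)))

/-- The map sending each element of `[0, m)` to the maximum of its block in `P`, extended by the
identity to all of `ℕ`. -/
def blockMax (x : ℕ) : ℕ :=
  if h : x < m then (P.part ⟨x, h⟩).max' ⟨_, P.mem_part (mem_univ _)⟩ else x

theorem blockMax_of_le {x : ℕ} (hx : m ≤ x) : blockMax P x = x := dif_neg hx.not_gt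

theorem isGreatest_blockMax (x : Fin m) :
    IsGreatest (Fin.val '' (P.part x : Set (Fin m))) (blockMax P x) := by
  rw [blockMax, dif_pos x.2]
  exact Fin.val_strictMono.monotone.map_isGreatest (isGreatest_max' _ _)

theorem blockMax_eq_iff_mem_part (x y : Fin m) : blockMax P y = blockMax P x ↔ y ∈ P.part x := by
  rw [P.mem_part_iff_part_eq_part (mem_univ y) (mem_univ x)]
  refine ⟨fun h => ?_, fun h => ?_⟩
  · obtain ⟨u, hu, hux⟩ := (isGreatest_blockMax P x).1
    obtain ⟨v, hv, hvy⟩ := (isGreatest_blockMax P y).1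
    obtain rfl : u = v := Fin.ext (by rw [hux, hvy, h])
    rw [← P.part_eq_of_mem (P.part_mem.2 (mem_univ x)) hu,
      ← P.part_eq_of_mem (P.part_mem.2 (mem_univ y)) hv]
  · have hx := isGreatest_blockMax P x
    rw [← h] at hx
    exact (isGreatest_blockMax P y).unique hx

theorem isBlockMax_blockMax {P : Finpartition (univ : Finset (Fin m))} (hP : IsNonCrossing P) :
    IsBlockMax 0 m (blockMax P) := by
  have hself (x : Fin m) : x ∈ P.part x := P.mem_part (mem_univ x)
  have hle (x : ℕ) : x ≤ blockMax P x := by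
    obtain hx | hx := lt_or_ge x m
    · exact (isGreatest_blockMax P ⟨x, hx⟩).2 ⟨_, hself _, rfl⟩
    · exact (blockMax_of_le P hx).ge
  refine ⟨hle, fun x => ?_, fun x y hxy hy => ?_, fun x hx => blockMax_of_le P (by omega),
    fun x hx => ?_⟩
  · obtain hx | hx := lt_or_ge x m
    · obtain ⟨u, hu, hux⟩ := (isGreatest_blockMax P ⟨x, hx⟩).1
      exact hux ▸ ((blockMax_eq_iff_mem_part P ⟨x, hx⟩ u).2 hu).trans hux.symm
    · rw [blockMax_of_le P hx, blockMax_of_le P hx]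
  · have hx : x < m := by
      by_contra! hx
      exact (hxy.trans hy).ne' (blockMax_of_le P hx)
    obtain ⟨u, hu, hux⟩ := (isGreatest_blockMax P ⟨x, hx⟩).1
    have hym : y < m := hy.trans (hux ▸ u.2)
    obtain ⟨v, hv, hvy⟩ := (isGreatest_blockMax P ⟨y, hym⟩).1
    by_contra! hlt
    have hyu : y < (u : ℕ) := hux ▸ hy
    have huv : (u : ℕ) < v := hux ▸ hvy ▸ hlt
    have hpart := hP ⟨x, hx⟩ ⟨y, hym⟩ u v hxy hyu huv
      _ (P.part_mem.2 (mem_univ _)) _ (P.part_mem.2 (mem_univ _)) (hself _) hu (hself _) hv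
    exact hlt.ne ((blockMax_eq_iff_mem_part P _ _).2 (hpart ▸ hself ⟨x, hx⟩))
  · obtain ⟨u, -, hux⟩ := (isGreatest_blockMax P ⟨x, hx⟩).1
    exact hux ▸ u.2

theorem blockMax_injective : Function.Injective (blockMax (m := m)) := by
  intro P Q h
  have hpart (x : Fin m) : P.part x = Q.part x := by
    ext y
    rw [← blockMax_eq_iff_mem_part, ← blockMax_eq_iff_mem_part, h]
  ext B
  refine ⟨fun hB => ?_, fun hB => ?_⟩
  · obtain ⟨x, hx⟩ := P.nonempty_of_mem_parts hB
    rw [← P.part_eq_of_mem hB hx, hpart]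
    exact Q.part_mem.2 (mem_univ x)
  · obtain ⟨x, hx⟩ := Q.nonempty_of_mem_parts hB
    rw [← Q.part_eq_of_mem hB hx, ← hpart]
    exact P.part_mem.2 (mem_univ x)

theorem IsBlockMax.exists_blockMax_eq (hg : IsBlockMax 0 m g) :
    ∃ P : Finpartition (univ : Finset (Fin m)), IsNonCrossing P ∧ blockMax P = g := by
  classical
  let P : Finpartition (univ : Finset (Fin m)) :=
    Finpartition.ofSetoid (Setoid.ker fun x : Fin m => g x)
  have hpart (x y : Fin m) : y ∈ P.part x ↔ g x = g y := Finpartition.mem_part_ofSetoid_iff_rel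
  refine ⟨P, fun a b c d hab hbc hcd B hB B' hB' ha hc hb hd => ?_, funext fun x => ?_⟩
  · rw [← P.part_eq_of_mem hB ha] at hc ⊢
    rw [← P.part_eq_of_mem hB' hb] at hd ⊢
    have hac : g a = g c := (hpart a c).1 hc
    have hbd : g b = g d := (hpart b d).1 hd
    have hba : g b ≤ g a := hg.apply_le_apply a b hab
      (hac ▸ (Fin.lt_def.1 hbc).trans_le (hg.le_apply c))
    have hcb : g c ≤ g b := hg.apply_le_apply b c hbc
      (hbd ▸ (Fin.lt_def.1 hcd).trans_le (hg.le_apply d))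
    have hab' : g a = g b := le_antisymm (hac ▸ hcb) hba
    exact (P.part_eq_of_mem (P.part_mem.2 (mem_univ a)) ((hpart a b).2 hab')).symm
  · obtain hx | hx := lt_or_ge x m
    · refine (isGreatest_blockMax P ⟨x, hx⟩).unique ⟨⟨⟨g x, hg.apply_lt x hx⟩, ?_, rfl⟩, ?_⟩
      · exact (hpart _ _).2 (hg.apply_apply x).symm
      · rintro _ ⟨y, hy, rfl⟩
        exact (hg.le_apply y).trans ((hpart _ _).1 hy).ge
    · rw [blockMax_of_le P hx, hg.apply_eq_self x (.inr hx)]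

theorem card_part_eq_blockCard (x : Fin m) :
    #(P.part x) = blockCard 0 m (blockMax P) (blockMax P x) := by
  rw [blockCard, ← card_map Fin.valEmbedding]
  congr 1
  ext z
  simp only [mem_map, mem_filter, mem_Ico, Fin.valEmbedding_apply, ← blockMax_eq_iff_mem_part]
  refine ⟨?_, fun ⟨⟨_, hz⟩, h⟩ => ⟨⟨z, hz⟩, h, rfl⟩⟩
  rintro ⟨y, hy, rfl⟩
  exact ⟨⟨Nat.zero_le _, y.2⟩, hy⟩

theorem forall_card_le_iff_forall_blockCard_le (k : ℕ) :
    (∀ B ∈ P.parts, #B ≤ k) ↔ ∀ v, blockCard 0 m (blockMax P) v ≤ k := by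
  refine ⟨fun h v => ?_, fun h B hB => ?_⟩
  · by_cases hv : ∃ x : Fin m, blockMax P x = v
    · obtain ⟨x, rfl⟩ := hv
      rw [← card_part_eq_blockCard]
      exact h _ (P.part_mem.2 (mem_univ x))
    · rw [blockCard_eq_zero fun x _ hx hxv => hv ⟨⟨x, hx⟩, hxv⟩]
      exact Nat.zero_le k
  · obtain ⟨x, hx⟩ := P.nonempty_of_mem_parts hB
    rw [← P.part_eq_of_mem hB hx, card_part_eq_blockCard]
    exact h _

end Finpartition

theorem countBounded_eq_card_boundedBlockMax (k m : ℕ) :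
    countBounded k m = #(boundedBlockMax k k 0 m) := by
  let toBlockMax (π : {π : NCPart m // ∀ B ∈ π.1.parts, #B ≤ k}) : boundedBlockMax k k 0 m :=
    ⟨blockMax π.1.1, mem_boundedBlockMax_self.2
      ⟨isBlockMax_blockMax π.1.2, (forall_card_le_iff_forall_blockCard_le _ k).1 π.2⟩⟩
  have hbij : Function.Bijective toBlockMax := by
    refine ⟨fun π ρ h => Subtype.ext <| Subtype.ext <| blockMax_injective <|
      congrArg Subtype.val h, fun ⟨g, hg⟩ => ?_⟩
    obtain ⟨hgb, hk⟩ := mem_boundedBlockMax_self.1 hg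
    obtain ⟨P, hP, rfl⟩ := hgb.exists_blockMax_eq
    exact ⟨⟨⟨P, hP⟩, (forall_card_le_iff_forall_blockCard_le P k).2 hk⟩, rfl⟩
  exact (Nat.card_congr (.ofBijective toBlockMax hbij)).trans (Nat.card_eq_finsetCard _)

theorem boundedGF_eq_X_mul (k : ℕ) : boundedGF k = X * boundedBlockMaxGF ℚ k k := by
  simp only [boundedGF, boundedBlockMaxGF, countBounded_eq_card_boundedBlockMax]

end NCPart

/-- For a fixed `k ≥ 1`, the series `y(z) = Σ_{m≥0} a_m z^{m+1}` counting
non-crossing partitions with all block sizes at most `k` satisfies the polynomial equation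
`y = z + y² − z·y^{k+1}`. -/
theorem boundedGF_equation (k : ℕ) (hk : 1 ≤ k) :
    boundedGF k =
      PowerSeries.X + (boundedGF k) ^ 2 - PowerSeries.X * (boundedGF k) ^ (k + 1) := by
  have hy : boundedGF k = X * ∑ i ∈ range (k + 1), boundedGF k ^ i := by
    rw [NCPart.boundedGF_eq_X_mul, ← NCPart.boundedBlockMaxGF_eq_geom_sum ℚ le_rfl]
  have hgeom := geom_sum_mul (boundedGF k) (k + 1)
  linear_combination X * -hgeom + (1 - boundedGF k) * hy
end
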